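/- arXiv:0710.5272 — 2 statements merged into one kernel-verified Lean document; each statement's English description precedes it below -/
import Mathlib

section
/- For every integer m ≥ 3, the matrices T_m and T̃_m are mutually inverse: T_m T̃_m = I_m and T̃_m T_m = I_m. -/
open Real Matrix

/-- Entry `(Q_m)_{s,t} = √(2/(m+1)) · sin(s t π/(m+1))` of the DST-I matrix,
for 1-based indices `s, t`. -/
noncomputable def dstIent (m s t : ℕ) : ℝ :=
  Real.sqrt (2 / ((m : ℝ) + 1)) *
    Real.sin ((s : ℝ) * (t : ℝ) * Real.pi / ((m : ℝ) + 1))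

/-- Entry `p_j = 1 − j/(m−1)` of the vector `p ∈ ℝ^{m−2}` (1-based `j = 1,…,m−2`). -/
noncomputable def pv (m j : ℕ) : ℝ := 1 - (j : ℝ) / ((m : ℝ) - 1)

/-- The normalizing factor `α_m = √(1 + ‖p‖₂²)`. -/
noncomputable def alphaAR (m : ℕ) : ℝ :=
  Real.sqrt (1 + ∑ j ∈ Finset.Icc 1 (m - 2), (pv m j) ^ 2)

/-- The anti-reflective transform `T_m`: first column `(α_m⁻¹, α_m⁻¹ p, 0)ᵀ`, last
column `(0, α_m⁻¹ J p, α_m⁻¹)ᵀ`, and columns `2,…,m−1` vanishing in rows `1` and `m`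
and forming `Q_{m−2}` on rows `2,…,m−1`. -/
noncomputable def arT (m : ℕ) : Matrix (Fin m) (Fin m) ℝ := fun s t =>
  if t.val = 0 then
    (if s.val = 0 then (alphaAR m)⁻¹
     else if s.val = m - 1 then 0
     else (alphaAR m)⁻¹ * pv m s.val)
  else if t.val = m - 1 then
    (if s.val = 0 then 0
     else if s.val = m - 1 then (alphaAR m)⁻¹
     else (alphaAR m)⁻¹ * pv m (m - 1 - s.val))
  else
    (if s.val = 0 ∨ s.val = m - 1 then 0 else dstIent (m - 2) s.val t.val)

/-- The matrix `T̃_m`: first column `(α_m, −Q_{m−2} p, 0)ᵀ`, last column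
`(0, −Q_{m−2} J p, α_m)ᵀ`, and columns `2,…,m−1` vanishing in rows `1` and `m`
and forming `Q_{m−2}` on rows `2,…,m−1`. -/
noncomputable def arTtil (m : ℕ) : Matrix (Fin m) (Fin m) ℝ := fun s t =>
  if t.val = 0 then
    (if s.val = 0 then alphaAR m
     else if s.val = m - 1 then 0
     else -∑ j ∈ Finset.Icc 1 (m - 2), dstIent (m - 2) s.val j * pv m j)
  else if t.val = m - 1 then
    (if s.val = 0 then 0
     else if s.val = m - 1 then alphaAR m
     else -∑ j ∈ Finset.Icc 1 (m - 2), dstIent (m - 2) s.val j * pv m (m - 1 - j))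
  else
    (if s.val = 0 ∨ s.val = m - 1 then 0 else dstIent (m - 2) s.val t.val)

/-!
Listing the two boundary indices before the interior ones turns `T_m` into the block lower
triangular matrix `[[α⁻¹ I, 0], [α⁻¹ P, Q]]`, where `P` has columns `p` and `J p`. Its inverse is
`[[α I, 0], [-Q⁻¹ P, Q⁻¹]]`, and this is `T̃_m` because the DST-I matrix is an involution. The
latter is the discrete orthogonality of sines: a product of two sines is a difference of cosines,
and `∑_{j < N} cos (j k π / N)` depends only on the parity of `k` unless `2 N ∣ k`.
-/

lemma sum_range_cos_int_mul_pi_div {N : ℕ} {k : ℤ} (hN : N ≠ 0) (hk : ¬ 2 * (N : ℤ) ∣ k) :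
    ∑ j ∈ Finset.range N, cos (k * π / N * j) = (1 - cos (k * π)) / 2 := by
  have hN' : (N : ℝ) ≠ 0 := Nat.cast_ne_zero.mpr hN
  have hsin : sin (k * π / N / 2) ≠ 0 := by
    rw [Ne, sin_eq_zero_iff]
    rintro ⟨l, hl⟩
    have hl' : (k : ℝ) = 2 * N * l := by
      field_simp at hl
      linarith
    exact hk ⟨l, by exact_mod_cast hl'⟩
  have hsum := sin_mul_sum_cos N (k * π / N) 0
  have hhalf : N * (k * π / N) / 2 = k * π / 2 := by rw [mul_div_cancel₀ _ hN']
  have hphase : (N - 1) * (k * π / N) / 2 + 0 = k * π / 2 - k * π / N / 2 := by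
    field_simp
    ring
  have hdouble : 2 * sin (k * π / 2) * cos (k * π / 2) = 0 := by
    rw [← sin_two_mul, mul_div_cancel₀ _ two_ne_zero, sin_int_mul_pi]
  have hsq : sin (k * π / 2) ^ 2 = (1 - cos (k * π)) / 2 := by
    rw [sin_sq_eq_half_sub, mul_div_cancel₀ _ two_ne_zero]
    ring
  simp only [hhalf, hphase, cos_sub, add_zero] at hsum
  apply mul_left_cancel₀ hsin
  linear_combination hsum + cos (k * π / N / 2) / 2 * hdouble + sin (k * π / N / 2) * hsq

lemma dstIent_mul_dstIent (n s j t : ℕ) :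
    dstIent n s j * dstIent n j t =
      (cos ((s - t : ℤ) * π / (n + 1 : ℕ) * j) - cos ((s + t : ℤ) * π / (n + 1 : ℕ) * j)) /
        (n + 1) := by
  have hsqrt : √(2 / ((n : ℝ) + 1)) * √(2 / ((n : ℝ) + 1)) = 2 / ((n : ℝ) + 1) :=
    mul_self_sqrt (by positivity)
  have hcos := two_mul_sin_mul_sin (s * j * π / (n + 1)) (j * t * π / (n + 1))
  have hsub : ((s - t : ℤ) * π / (n + 1 : ℕ) * j : ℝ) =
      s * j * π / (n + 1) - j * t * π / (n + 1) := by push_cast; ring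
  have hadd : ((s + t : ℤ) * π / (n + 1 : ℕ) * j : ℝ) =
      s * j * π / (n + 1) + j * t * π / (n + 1) := by push_cast; ring
  rw [hsub, hadd, ← hcos, dstIent, dstIent, mul_mul_mul_comm, hsqrt]
  ring

lemma sum_range_dstIent_mul_dstIent {n s t : ℕ} (hs : s ∈ Finset.Icc 1 n)
    (ht : t ∈ Finset.Icc 1 n) :
    ∑ j ∈ Finset.range (n + 1), dstIent n s j * dstIent n j t = if s = t then 1 else 0 := by
  rw [Finset.mem_Icc] at hs ht
  have hadd : ¬ 2 * ((n + 1 : ℕ) : ℤ) ∣ s + t := fun h => by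
    have := Int.le_of_dvd (by omega) h
    omega
  have hparity : cos ((s + t : ℤ) * π) = cos ((s - t : ℤ) * π) := by
    simp [add_mul, sub_mul, cos_add, cos_sub]
  simp_rw [dstIent_mul_dstIent]
  rw [← Finset.sum_div, Finset.sum_sub_distrib, sum_range_cos_int_mul_pi_div n.succ_ne_zero hadd,
    hparity]
  split_ifs with hst
  · subst hst
    simp [Nat.cast_add_one_ne_zero n]
  · have hsub : ¬ 2 * ((n + 1 : ℕ) : ℤ) ∣ s - t := fun h => by
      have := Int.eq_zero_of_abs_lt_dvd h (by rw [abs_lt]; omega)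
      omega
    rw [sum_range_cos_int_mul_pi_div n.succ_ne_zero hsub, sub_self, zero_div]

/-- The DST-I matrix `Q_n`; the 0-based indices of `Fin n` are shifted to the 1-based ones of
`dstIent`. -/
noncomputable def dstI (n : ℕ) : Matrix (Fin n) (Fin n) ℝ :=
  of fun s t => dstIent n (s + 1) (t + 1)

lemma dstI_mul_self (n : ℕ) : dstI n * dstI n = 1 := by
  ext s t
  have horth := sum_range_dstIent_mul_dstIent (n := n) (s := s + 1) (t := t + 1)
    (Finset.mem_Icc.mpr ⟨by omega, s.isLt⟩) (Finset.mem_Icc.mpr ⟨by omega, t.isLt⟩)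
  have hzero : dstIent n (s + 1) 0 = 0 := by simp [dstIent]
  rw [Finset.sum_range_succ', hzero, zero_mul, add_zero,
    ← Fin.sum_univ_eq_sum_range fun j => dstIent n (s + 1) (j + 1) * dstIent n (j + 1) (t + 1)]
    at horth
  simpa only [mul_apply, dstI, of_apply, one_apply, Fin.ext_iff, Nat.add_right_cancel_iff]
    using horth

lemma sum_univ_fin_add_one {M : Type*} [AddCommMonoid M] (n : ℕ) (f : ℕ → M) :
    ∑ j : Fin n, f (j + 1) = ∑ j ∈ Finset.Icc 1 n, f j := by
  rw [Fin.sum_univ_eq_sum_range fun j => f (j + 1), Finset.range_eq_Ico, Finset.sum_Ico_add']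
  rfl

lemma fromBlocks_zero₁₂_mul_eq_one {l n R : Type*} [Fintype l] [Fintype n] [DecidableEq l]
    [DecidableEq n] [Ring R] {A A' : Matrix l l R} {D D' : Matrix n n R} (C : Matrix n l R)
    (hA : A * A' = 1) (hD : D * D' = 1) :
    fromBlocks A 0 C D * fromBlocks A' 0 (-(D' * C * A')) D' = 1 := by
  have hlower : C * A' + D * -(D' * C * A') = 0 := by
    rw [Matrix.mul_neg, ← Matrix.mul_assoc, ← Matrix.mul_assoc, hD, Matrix.one_mul, add_neg_cancel]
  rw [fromBlocks_multiply, hlower]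
  simp [hA, hD]

/-- Splits the indices of an `(n + 2)`-vector into the two boundary ones and the `n` interior
ones, so that `T_{n+2}` and `T̃_{n+2}` become block lower triangular. -/
noncomputable def boundarySumInterior (n : ℕ) : Fin 2 ⊕ Fin n ≃ Fin (n + 2) :=
  .ofBijective (Sum.elim ![0, Fin.last (n + 1)] fun i => i.castSucc.succ) <| by
    rw [Fintype.bijective_iff_injective_and_card]
    refine ⟨Function.Injective.sumElim ?_ ?_ ?_, by simp [add_comm]⟩
    · exact injective_pair_iff_ne.mpr Fin.last_pos.ne
    · exact (Fin.succ_injective _).comp (Fin.castSucc_injective _)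
    · exact Fin.forall_fin_two.mpr ⟨fun i => i.castSucc.succ_ne_zero.symm,
        fun i h => i.castSucc_ne_last (Fin.succ_injective _ h.symm)⟩

/-- The `n × 2` matrix with columns `p` and `J p`, where `p` is the vector entering `T_{n+2}`;
the 0-based row `i` holds the 1-based entries `i + 1` of `p` and `J p`. -/
noncomputable def antireflectiveCols (n : ℕ) : Matrix (Fin n) (Fin 2) ℝ :=
  of fun i => ![pv (n + 2) (i + 1), pv (n + 2) (n - i)]

lemma dstI_mul_antireflectiveCols_zero (n : ℕ) (i : Fin n) :
    (dstI n * antireflectiveCols n) i 0 =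
      ∑ j ∈ Finset.Icc 1 n, dstIent n (i + 1) j * pv (n + 2) j := by
  rw [← sum_univ_fin_add_one]
  simp [mul_apply, dstI, antireflectiveCols]

lemma dstI_mul_antireflectiveCols_one (n : ℕ) (i : Fin n) :
    (dstI n * antireflectiveCols n) i 1 =
      ∑ j ∈ Finset.Icc 1 n, dstIent n (i + 1) j * pv (n + 2) (n + 1 - j) := by
  rw [← sum_univ_fin_add_one n fun j => dstIent n (i + 1) j * pv (n + 2) (n + 1 - j)]
  simp [mul_apply, dstI, antireflectiveCols]

lemma arT_submatrix_boundarySumInterior (n : ℕ) :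
    (arT (n + 2)).submatrix (boundarySumInterior n) (boundarySumInterior n) =
      fromBlocks ((alphaAR (n + 2))⁻¹ • 1) 0 ((alphaAR (n + 2))⁻¹ • antireflectiveCols n)
        (dstI n) := by
  ext (i | i) (j | j)
  · fin_cases i <;> fin_cases j <;> simp [arT, boundarySumInterior]
  · fin_cases i <;> simp [arT, boundarySumInterior, j.isLt.ne]
  · fin_cases j <;> simp [arT, boundarySumInterior, antireflectiveCols, i.isLt.ne]
  · simp [arT, boundarySumInterior, dstI, i.isLt.ne, j.isLt.ne]

lemma arTtil_submatrix_boundarySumInterior (n : ℕ) :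
    (arTtil (n + 2)).submatrix (boundarySumInterior n) (boundarySumInterior n) =
      fromBlocks (alphaAR (n + 2) • 1) 0 (-(dstI n * antireflectiveCols n)) (dstI n) := by
  ext (i | i) (j | j)
  · fin_cases i <;> fin_cases j <;> simp [arTtil, boundarySumInterior]
  · fin_cases i <;> simp [arTtil, boundarySumInterior, j.isLt.ne]
  · fin_cases j <;>
      simp [arTtil, boundarySumInterior, dstI_mul_antireflectiveCols_zero,
        dstI_mul_antireflectiveCols_one, i.isLt.ne]
  · simp [arTtil, boundarySumInterior, dstI, i.isLt.ne, j.isLt.ne]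

lemma alphaAR_pos (m : ℕ) : 0 < alphaAR m :=
  sqrt_pos.mpr (by positivity)

/-- For every integer `m ≥ 3`, the matrices `T_m` and `T̃_m` are mutually inverse:
`T_m T̃_m = I_m` and `T̃_m T_m = I_m`. -/
theorem arT_mul_arTtil (m : ℕ) (hm : 3 ≤ m) :
    arT m * arTtil m = 1 ∧ arTtil m * arT m = 1 := by
  obtain ⟨n, rfl⟩ : ∃ n, m = n + 2 := Nat.exists_eq_add_of_le' (by omega)
  let e := boundarySumInterior n
  let α := alphaAR (n + 2)
  have hα : α ≠ 0 := (alphaAR_pos _).ne'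
  have hcorner : (α⁻¹ • 1 : Matrix (Fin 2) (Fin 2) ℝ) * (α • 1) = 1 := by simp [hα]
  have hlower : dstI n * (α⁻¹ • antireflectiveCols n) * (α • 1 : Matrix (Fin 2) (Fin 2) ℝ) =
      dstI n * antireflectiveCols n := by simp [smul_smul, hα]
  have hblocks : (arT (n + 2)).submatrix e e * (arTtil (n + 2)).submatrix e e = 1 := by
    rw [arT_submatrix_boundarySumInterior, arTtil_submatrix_boundarySumInterior, ← hlower]
    exact fromBlocks_zero₁₂_mul_eq_one _ hcorner (dstI_mul_self n)
  have hright : arT (n + 2) * arTtil (n + 2) = 1 := by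
    rw [submatrix_mul_equiv, ← submatrix_one_equiv e] at hblocks
    exact (reindex e.symm e.symm).injective hblocks
  exact ⟨hright, mul_eq_one_comm.mp hright⟩
end

section
/- (Re-blurring as Tikhonov regularization in a transformed space.) Let T ∈ ℝ^{N×N} be invertible, let Λ_A and Λ_D be real diagonal N×N matrices, set A = T Λ_A T^{−1} and D = T Λ_D T^{−1}, let μ > 0 and g ∈ ℝ^N. Then a vector f ∈ ℝ^N satisfies the re-blurring equation (A² + μ D²) f = A g if and only if f is a global minimizer of the functional F(x) = ‖T^{−1}(A x − g)‖₂² + μ ‖T^{−1} D x‖₂² over x ∈ ℝ^N. -/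
open Matrix

/-!
Every weight `W` with `W * A = P * W`, `P` symmetric, makes `A` self-adjoint for the inner product
with Gram matrix `Wᵀ * W`. For `W = T⁻¹` the normal equations of the Tikhonov problem with data
matrix `W * A`, penalty matrix `W * D` and right-hand side `W *ᵥ g` are therefore `Wᵀ * W` applied
to the re-blurring equation, and `Wᵀ * W` is invertible.
-/

section Tikhonov

variable {m n p R K : Type*} [Fintype m] [Fintype n] [Fintype p] [CommRing R]
  [Field K] [LinearOrder K] [IsStrictOrderedRing K]

/-- The Tikhonov functional `‖M x - b‖² + μ ‖L x‖²` with data matrix `M`, data `b`, penalty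
matrix `L` and regularization parameter `μ`; squared Euclidean norms are written as dot products,
so that it makes sense over any commutative ring. -/
def tikhonovFunctional (M : Matrix m n R) (L : Matrix p n R) (μ : R) (b : m → R)
    (x : n → R) : R :=
  (M *ᵥ x - b) ⬝ᵥ (M *ᵥ x - b) + μ * (L *ᵥ x ⬝ᵥ L *ᵥ x)

theorem tikhonovFunctional_add (M : Matrix m n R) (L : Matrix p n R) (μ : R)
    (b : m → R) (x h : n → R) :
    tikhonovFunctional M L μ b (x + h) =
      tikhonovFunctional M L μ b x +
        2 * (h ⬝ᵥ ((Mᵀ * M + μ • (Lᵀ * L)) *ᵥ x - Mᵀ *ᵥ b)) +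
        tikhonovFunctional M L μ 0 h := by
  have gradient : h ⬝ᵥ ((Mᵀ * M + μ • (Lᵀ * L)) *ᵥ x - Mᵀ *ᵥ b) =
      (M *ᵥ x - b) ⬝ᵥ M *ᵥ h + μ * (L *ᵥ x ⬝ᵥ L *ᵥ h) := by
    simp only [add_mulVec, smul_mulVec, ← mulVec_mulVec, dotProduct_sub, dotProduct_add,
      dotProduct_smul, smul_eq_mul, dotProduct_transpose_mulVec, sub_dotProduct]
    ring
  have expand : M *ᵥ (x + h) - b = (M *ᵥ x - b) + M *ᵥ h := by
    rw [mulVec_add]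
    abel
  rw [gradient]
  simp only [tikhonovFunctional, expand]
  simp only [mulVec_add, sub_zero, add_dotProduct, dotProduct_add]
  rw [dotProduct_comm (M *ᵥ h) (M *ᵥ x - b), dotProduct_comm (L *ᵥ h) (L *ᵥ x)]
  ring

theorem tikhonovFunctional_smul_zero (M : Matrix m n R) (L : Matrix p n R) (μ t : R)
    (x : n → R) :
    tikhonovFunctional M L μ 0 (t • x) = t ^ 2 * tikhonovFunctional M L μ 0 x := by
  simp only [tikhonovFunctional, sub_zero, mulVec_smul, smul_dotProduct, dotProduct_smul,
    smul_eq_mul]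
  ring

theorem tikhonovFunctional_nonneg (M : Matrix m n K) (L : Matrix p n K) {μ : K} (hμ : 0 ≤ μ)
    (b : m → K) (x : n → K) : 0 ≤ tikhonovFunctional M L μ b x :=
  add_nonneg (Finset.sum_nonneg fun _ _ => mul_self_nonneg _)
    (mul_nonneg hμ (Finset.sum_nonneg fun _ _ => mul_self_nonneg _))

theorem normalEquation_iff_forall_tikhonovFunctional_le (M : Matrix m n K) (L : Matrix p n K)
    {μ : K} (hμ : 0 ≤ μ) (b : m → K) (f : n → K) :
    (Mᵀ * M + μ • (Lᵀ * L)) *ᵥ f = Mᵀ *ᵥ b ↔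
      ∀ x, tikhonovFunctional M L μ b f ≤ tikhonovFunctional M L μ b x := by
  rw [← sub_eq_zero]
  set r := (Mᵀ * M + μ • (Lᵀ * L)) *ᵥ f - Mᵀ *ᵥ b with hr
  constructor
  · intro hr_zero x
    have hx := tikhonovFunctional_add M L μ b f (x - f)
    rw [add_sub_cancel, ← hr, hr_zero, dotProduct_zero, mul_zero, add_zero] at hx
    rw [hx]
    exact le_add_of_nonneg_right (tikhonovFunctional_nonneg M L hμ 0 _)
  · intro hmin
    -- Along the line `f + t • r` the increment is a quadratic in `t` without constant term.
    have increment_nonneg (t : K) :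
        0 ≤ tikhonovFunctional M L μ 0 r * (t * t) + 2 * (r ⬝ᵥ r) * t + 0 := by
      have ht := hmin (f + t • r)
      rw [tikhonovFunctional_add, ← hr, tikhonovFunctional_smul_zero, smul_dotProduct,
        smul_eq_mul] at ht
      linarith
    have hdiscrim : (2 * (r ⬝ᵥ r)) ^ 2 ≤ 0 := by
      simpa only [discrim, mul_zero, sub_zero] using discrim_le_zero increment_nonneg
    have hrr : 2 * (r ⬝ᵥ r) = 0 := sq_nonpos_iff _ |>.mp hdiscrim
    exact dotProduct_self_eq_zero.mp (mul_eq_zero.mp hrr |>.resolve_left two_ne_zero)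

end Tikhonov

section Weight

variable {m n R : Type*} [Fintype m] [Fintype n] [CommSemiring R]
  {W : Matrix m n R} {A D : Matrix n n R} {P Q : Matrix m m R}

theorem transpose_mul_weight_of_intertwines (hP : P.IsSymm) (hA : W * A = P * W) :
    (W * A)ᵀ * W = Wᵀ * W * A := by
  rw [Matrix.mul_assoc Wᵀ, hA, transpose_mul, hP.eq, Matrix.mul_assoc]

theorem normalMatrix_eq_gram_mul_reblurring (hP : P.IsSymm) (hQ : Q.IsSymm)
    (hA : W * A = P * W) (hD : W * D = Q * W) (μ : R) :
    (W * A)ᵀ * (W * A) + μ • ((W * D)ᵀ * (W * D)) = Wᵀ * W * (A * A + μ • (D * D)) := by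
  rw [← Matrix.mul_assoc _ W A, ← Matrix.mul_assoc _ W D,
    transpose_mul_weight_of_intertwines hP hA, transpose_mul_weight_of_intertwines hQ hD,
    Matrix.mul_add, Matrix.mul_smul, Matrix.mul_assoc _ A, Matrix.mul_assoc _ D]

end Weight

theorem inv_mul_conj {n R : Type*} [Fintype n] [DecidableEq n] [CommRing R]
    {T : Matrix n n R} (hT : IsUnit T.det) (P : Matrix n n R) : T⁻¹ * (T * P * T⁻¹) = P * T⁻¹ := by
  rw [Matrix.mul_assoc, nonsing_inv_mul_cancel_left _ _ hT]

theorem reblurring_is_transformed_tikhonov_general {n K : Type*} [Fintype n] [DecidableEq n]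
    [Field K] [LinearOrder K] [IsStrictOrderedRing K] (T P Q : Matrix n n K) (μ : K) (g : n → K)
    (hT : IsUnit T.det) (hμ : 0 ≤ μ) (hP : P.IsSymm) (hQ : Q.IsSymm) (A D : Matrix n n K)
    (hA : A = T * P * T⁻¹) (hD : D = T * Q * T⁻¹) (f : n → K) :
    (A * A + μ • (D * D)) *ᵥ f = A *ᵥ g ↔
      ∀ x : n → K,
        (∑ i, (T⁻¹ *ᵥ (A *ᵥ f - g)) i ^ 2 + μ * ∑ i, (T⁻¹ *ᵥ (D *ᵥ f)) i ^ 2) ≤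
          ∑ i, (T⁻¹ *ᵥ (A *ᵥ x - g)) i ^ 2 + μ * ∑ i, (T⁻¹ *ᵥ (D *ᵥ x)) i ^ 2 := by
  have hWA : T⁻¹ * A = P * T⁻¹ := hA ▸ inv_mul_conj hT P
  have hWD : T⁻¹ * D = Q * T⁻¹ := hD ▸ inv_mul_conj hT Q
  have functional_eq (x : n → K) :
      ∑ i, (T⁻¹ *ᵥ (A *ᵥ x - g)) i ^ 2 + μ * ∑ i, (T⁻¹ *ᵥ (D *ᵥ x)) i ^ 2 =
        tikhonovFunctional (T⁻¹ * A) (T⁻¹ * D) μ (T⁻¹ *ᵥ g) x := by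
    simp only [tikhonovFunctional, dotProduct, mulVec_sub, mulVec_mulVec, sq]
  have gram_isUnit : IsUnit ((T⁻¹)ᵀ * T⁻¹) := by
    have hT_inv : IsUnit T⁻¹ := isUnit_nonsing_inv_iff.mpr ((isUnit_iff_isUnit_det T).mpr hT)
    exact ((isUnit_transpose _).mpr hT_inv).mul hT_inv
  simp only [functional_eq]
  rw [← normalEquation_iff_forall_tikhonovFunctional_le _ _ hμ,
    normalMatrix_eq_gram_mul_reblurring hP hQ hWA hWD, mulVec_mulVec,
    transpose_mul_weight_of_intertwines hP hWA,
    ← mulVec_mulVec _ (_ * _), ← mulVec_mulVec _ (_ * _)]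
  exact (mulVec_injective_of_isUnit gram_isUnit).eq_iff.symm

/-- Re-blurring as Tikhonov regularization in a transformed space: if
`A = T Λ_A T⁻¹` and `D = T Λ_D T⁻¹` with `T` invertible and `Λ_A, Λ_D` real
diagonal, and `μ > 0`, then `f` satisfies the re-blurring equation
`(A² + μD²) f = A g` if and only if `f` is a global minimizer of
`F(x) = ‖T⁻¹(Ax − g)‖₂² + μ‖T⁻¹Dx‖₂²`. -/
theorem reblurring_is_transformed_tikhonov (N : ℕ)
    (T : Matrix (Fin N) (Fin N) ℝ) (ΛA ΛD : Fin N → ℝ) (μ : ℝ) (g : Fin N → ℝ)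
    (hT : IsUnit T.det) (hμ : 0 < μ)
    (A D : Matrix (Fin N) (Fin N) ℝ)
    (hA : A = T * Matrix.diagonal ΛA * T⁻¹) (hD : D = T * Matrix.diagonal ΛD * T⁻¹) :
    ∀ f : Fin N → ℝ,
      (A * A + μ • (D * D)).mulVec f = A.mulVec g ↔
        ∀ x : Fin N → ℝ,
          (∑ i, ((T⁻¹).mulVec (A.mulVec f - g) i) ^ 2 +
              μ * ∑ i, ((T⁻¹).mulVec (D.mulVec f) i) ^ 2) ≤
            (∑ i, ((T⁻¹).mulVec (A.mulVec x - g) i) ^ 2 +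
              μ * ∑ i, ((T⁻¹).mulVec (D.mulVec x) i) ^ 2) := by
  exact reblurring_is_transformed_tikhonov_general T (diagonal ΛA) (diagonal ΛD) μ g hT hμ.le
    (isSymm_diagonal ΛA) (isSymm_diagonal ΛD) A D hA hD
end
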